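/- Let n ≥ 2 be an integer and let G be the grid P_n □ P_2. Then the strong convexity spectrum of G equals S_SC(G) = ({1} ∪ {2j : ⌊n/2⌋ ≤ j ≤ n−1}) \ {2}. -/

import Mathlib

/-!  Common definitions: oriented graphs, geodesic convexity, convexity number,
strong convexity spectrum, and grid graphs. -/

variable {V : Type*}

/-- A directed walk of length `k` from `u` to `v` along the arc relation `A`,
encoded by the function `f` listing its vertices. -/
def IsDirWalk (A : V → V → Prop) (k : ℕ) (f : ℕ → V) (u v : V) : Prop :=
  f 0 = u ∧ f k = v ∧ ∀ i, i < k → A (f i) (f (i + 1))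

/-- There is a directed walk from `u` to `v`. -/
def DirReachable (A : V → V → Prop) (u v : V) : Prop :=
  ∃ k f, IsDirWalk A k f u v

/-- A digraph (given by its arc relation) is strongly connected. -/
def StrongConnected (A : V → V → Prop) : Prop :=
  ∀ u v : V, DirReachable A u v

/-- A `uv`-geodesic: a directed walk from `u` to `v` of minimum possible length
(such a walk is automatically a directed path). -/
def IsGeodesic (A : V → V → Prop) (k : ℕ) (f : ℕ → V) (u v : V) : Prop :=
  IsDirWalk A k f u v ∧ ∀ k' f', IsDirWalk A k' f' u v → k ≤ k'

/-- A nonempty vertex set `C` is convex if every vertex lying on a geodesic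
between two vertices of `C` (in either direction) belongs to `C`. -/
def DConvex (A : V → V → Prop) (C : Set V) : Prop :=
  C.Nonempty ∧ ∀ u ∈ C, ∀ v ∈ C, ∀ k f, IsGeodesic A k f u v → ∀ i ≤ k, f i ∈ C

/-- `A` is an orientation of the simple graph `G`: every arc is along an edge,
every edge gets an arc, and no edge gets both directions. -/
def IsOrientation (G : SimpleGraph V) (A : V → V → Prop) : Prop :=
  (∀ x y, A x y → G.Adj x y) ∧ (∀ x y, G.Adj x y → A x y ∨ A y x) ∧
    (∀ x y, A x y → ¬ A y x)

/-- The convexity number of a digraph: the maximum cardinality of a proper convex set. -/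
noncomputable def convexityNumber [Fintype V] (A : V → V → Prop) : ℕ :=
  sSup {k | ∃ C : Set V, DConvex A C ∧ C ≠ Set.univ ∧ C.ncard = k}

/-- The strong convexity spectrum of a graph: the set of convexity numbers of
its strongly connected orientations. -/
def strongConvexitySpectrum [Fintype V] (G : SimpleGraph V) : Set ℕ :=
  {k | ∃ A : V → V → Prop, IsOrientation G A ∧ StrongConnected A ∧ convexityNumber A = k}

/-- The grid graph `P_n □ P_m`. -/
def gridGraph (n m : ℕ) : SimpleGraph (Fin n × Fin m) :=
  (SimpleGraph.pathGraph n).boxProd (SimpleGraph.pathGraph m)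

/-!
A strong orientation directs the two horizontal edges between consecutive columns oppositely, so it
is recorded by one row per pair of consecutive columns and one row per vertical edge. Strongness
means that every inner column lets excursions turn around from the left or from the right.

A convex set meeting two columns contains every column in between, because geodesics in both
directions pick up both ends of each of the two edges crossing between consecutive columns. Hence a
nontrivial convex set is an interval of columns. If one of its ends is not an end of the ladder,
then, comparing the length of a turn inside the interval with that of a turn outside it, all columns
on the inner side of that end form a convex set too; so the convexity number is `1` or twice the
largest number of columns in a proper convex initial or final segment.

If no proper initial or final segment with at least half of the columns (rounded down) is convex,
then the middle square is a directed cycle, and this propagates to all squares; in that case no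
proper segment is convex. Conversely, all squares cyclic gives `1`, and breaking the cyclic pattern
around column `j` gives `2 * j`.
-/

/-- There is a directed walk of length exactly `k` from `u` to `v`. -/
def HasDirWalk (A : V → V → Prop) (k : ℕ) (u v : V) : Prop :=
  ∃ f, IsDirWalk A k f u v

section Walks

variable {A : V → V → Prop} {k l : ℕ} {f g : ℕ → V} {u v w : V}

namespace IsDirWalk

theorem append (hf : IsDirWalk A k f u v) (hg : IsDirWalk A l g v w) :
    IsDirWalk A (k + l) (fun i => if i ≤ k then f i else g (i - k)) u w := by
  obtain ⟨hf_zero, hf_end, hf_arc⟩ := hf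
  obtain ⟨hg_zero, hg_end, hg_arc⟩ := hg
  refine ⟨by simp [hf_zero], by grind, fun i hi => ?_⟩
  rcases lt_trichotomy i k with hik | rfl | hki
  · simpa [hik.le, Nat.succ_le_of_lt hik] using hf_arc i hik
  · simpa [hf_end, ← hg_zero] using hg_arc 0 (by omega)
  · have hsub : i + 1 - k = i - k + 1 := by omega
    simpa [hki.not_ge, (hki.trans i.lt_succ_self).not_ge, hsub] using hg_arc (i - k) (by omega)

theorem segment (hf : IsDirWalk A k f u v) {i j : ℕ} (hij : i ≤ j) (hj : j ≤ k) :
    IsDirWalk A (j - i) (fun t => f (i + t)) (f i) (f j) :=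
  ⟨rfl, congrArg f (by omega), fun t _ => hf.2.2 (i + t) (by omega)⟩

theorem length_pos (hf : IsDirWalk A k f u v) (huv : u ≠ v) : 0 < k := by
  rw [Nat.pos_iff_ne_zero]
  rintro rfl
  exact huv (hf.1.symm.trans hf.2.1)

theorem arc_first (hf : IsDirWalk A k f u v) (hk : 0 < k) : A u (f 1) :=
  hf.1 ▸ hf.2.2 0 hk

theorem arc_last (hf : IsDirWalk A k f u v) (hk : 0 < k) : A (f (k - 1)) v := by
  have harc := hf.2.2 (k - 1) (by omega)
  rwa [Nat.sub_add_cancel hk, hf.2.1] at harc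

theorem exists_step_out (hf : IsDirWalk A k f u v) {S : Set V} (hu : u ∈ S) (hv : v ∉ S) :
    ∃ i < k, f i ∈ S ∧ f (i + 1) ∉ S := by
  by_contra! hstay
  have hmem : ∀ i ≤ k, f i ∈ S := by
    intro i
    induction i with
    | zero => exact fun _ => hf.1 ▸ hu
    | succ i ih => exact fun hi => hstay i hi (ih (by omega))
  exact hv (hf.2.1 ▸ hmem k le_rfl)

theorem potential_le (hf : IsDirWalk A k f u v) {φ : V → ℤ}
    (hφ : ∀ i < k, φ (f (i + 1)) ≤ φ (f i) + 1) : φ v ≤ φ u + k := by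
  have hle : ∀ i ≤ k, φ (f i) ≤ φ u + i := by
    intro i
    induction i with
    | zero => simp [hf.1]
    | succ i ih => intro hi; have := hφ i hi; have := ih (by omega); push_cast; omega
  exact hf.2.1 ▸ hle k le_rfl

end IsDirWalk

namespace HasDirWalk

theorem refl (A : V → V → Prop) (u : V) : HasDirWalk A 0 u u :=
  ⟨fun _ => u, rfl, rfl, by simp⟩

theorem single (h : A u v) : HasDirWalk A 1 u v :=
  ⟨fun i => if i = 0 then u else v, by simp [IsDirWalk, h]⟩

theorem trans : HasDirWalk A k u v → HasDirWalk A l v w → HasDirWalk A (k + l) u w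
  | ⟨_, hf⟩, ⟨_, hg⟩ => ⟨_, hf.append hg⟩

end HasDirWalk

namespace DirReachable

theorem refl (A : V → V → Prop) (u : V) : DirReachable A u u :=
  ⟨0, HasDirWalk.refl A u⟩

theorem single (h : A u v) : DirReachable A u v :=
  ⟨1, HasDirWalk.single h⟩

theorem trans : DirReachable A u v → DirReachable A v w → DirReachable A u w
  | ⟨k, hk⟩, ⟨l, hl⟩ => ⟨k + l, HasDirWalk.trans hk hl⟩

theorem exists_isGeodesic (h : DirReachable A u v) : ∃ k f, IsGeodesic A k f u v := by
  classical
  have hex : ∃ k, HasDirWalk A k u v := h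
  obtain ⟨f, hf⟩ := Nat.find_spec hex
  exact ⟨Nat.find hex, f, hf, fun _ f' hf' => Nat.find_min' hex ⟨f', hf'⟩⟩

end DirReachable

theorem StrongConnected.exists_arc_out (hA : StrongConnected A) {S : Set V} (hS : S.Nonempty)
    (hSc : Sᶜ.Nonempty) : ∃ x ∈ S, ∃ y ∉ S, A x y := by
  obtain ⟨u, hu⟩ := hS
  obtain ⟨v, hv⟩ := hSc
  obtain ⟨k, f, hf⟩ := hA u v
  obtain ⟨i, hi, hin, hout⟩ := hf.exists_step_out hu hv
  exact ⟨f i, hin, f (i + 1), hout, hf.2.2 i hi⟩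

theorem IsGeodesic.segment (hf : IsGeodesic A k f u v) {i j : ℕ} (hij : i ≤ j) (hj : j ≤ k) :
    IsGeodesic A (j - i) (fun t => f (i + t)) (f i) (f j) := by
  refine ⟨hf.1.segment hij hj, fun m g hg => ?_⟩
  have hshort := ((hf.1.segment i.zero_le (hij.trans hj)).append hg).append
    (hf.1.segment hj le_rfl)
  rw [hf.1.1, hf.1.2.1] at hshort
  have := hf.2 _ _ hshort
  omega

end Walks

section Convexity

variable {A : V → V → Prop} {C : Set V}

theorem dconvex_singleton (A : V → V → Prop) (u : V) : DConvex A {u} := by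
  refine ⟨Set.singleton_nonempty u, ?_⟩
  rintro _ rfl v rfl k f hf i hi
  obtain ⟨g, hg⟩ := HasDirWalk.refl A v
  obtain rfl : i = 0 := by have := hf.2 0 g hg; omega
  exact hf.1.1

theorem DConvex.mem_of_hasDirWalk (hC : DConvex A C) {u v w : V} (hu : u ∈ C) (hv : v ∈ C)
    {k l : ℕ} (huw : HasDirWalk A k u w) (hwv : HasDirWalk A l w v)
    (hmin : ∀ m, HasDirWalk A m u v → k + l ≤ m) : w ∈ C := by
  obtain ⟨f, hf⟩ := huw
  obtain ⟨g, hg⟩ := hwv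
  have hmem := hC.2 u hu v hv _ _ ⟨hf.append hg, fun m f' hf' => hmin m ⟨f', hf'⟩⟩ k (by omega)
  simpa [hf.2.1] using hmem

theorem dconvex_of_geodesic_interior_mem (hne : C.Nonempty)
    (hC : ∀ u ∈ C, ∀ v ∈ C, ∀ k f, 1 < k → IsGeodesic A k f u v → ∃ i, 0 < i ∧ i < k ∧ f i ∈ C) :
    DConvex A C := by
  refine ⟨hne, fun u hu v hv k => ?_⟩
  induction k using Nat.strong_induction_on generalizing u v with
  | _ k ih =>
    intro f hf i hi
    rcases le_or_gt k 1 with hk | hk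
    · obtain rfl | rfl : i = 0 ∨ i = k := by omega
      · exact hf.1.1 ▸ hu
      · exact hf.1.2.1 ▸ hv
    · obtain ⟨j, hj_pos, hjk, hj⟩ := hC u hu v hv k f hk hf
      rcases le_total i j with hij | hji
      · simpa using ih (j - 0) (by omega) (f 0) (hf.1.1 ▸ hu) (f j) hj _
          (hf.segment j.zero_le hjk.le) i hij
      · simpa [hji] using ih (k - j) (by omega) (f j) hj (f k) (hf.1.2.1 ▸ hv) _
          (hf.segment hjk.le le_rfl) (i - j) (by omega)

theorem isGreatest_convexityNumber [Fintype V] [Nontrivial V] (A : V → V → Prop) :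
    IsGreatest {k | ∃ C : Set V, DConvex A C ∧ C ≠ Set.univ ∧ C.ncard = k}
      (convexityNumber A) := by
  have hbdd : BddAbove {k | ∃ C : Set V, DConvex A C ∧ C ≠ Set.univ ∧ C.ncard = k} := by
    refine ⟨Nat.card V, ?_⟩
    rintro _ ⟨C, -, -, rfl⟩
    exact Set.ncard_le_card C
  obtain ⟨u⟩ : Nonempty V := inferInstance
  exact ⟨Nat.sSup_mem ⟨_, {u}, dconvex_singleton A u, Set.singleton_ne_univ u, rfl⟩ hbdd,
    fun _ hk => le_csSup hbdd hk⟩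

end Convexity

theorem bool_eq_of_ne {x y z : Bool} (hx : x ≠ z) (hy : y ≠ z) : x = y :=
  (Bool.eq_not.2 hx).trans (Bool.eq_not.2 hy).symm

/-- Coordinates identifying `V` with the vertex set of a ladder: each vertex has a column in
`{lo, …, hi}` and one of two rows. Integer columns, rather than `{1, …, n}`, make the left-right
reflection `i ↦ -i`. -/
structure LadderCoords (col : V → ℤ) (row : V → Bool) (lo hi : ℤ) : Prop where
  ext : ∀ p q, col p = col q → row p = row q → p = q
  exists_vertex : ∀ i, lo ≤ i → i ≤ hi → ∀ x, ∃ p, col p = i ∧ row p = x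
  lo_le_col : ∀ p, lo ≤ col p
  col_le_hi : ∀ p, col p ≤ hi

/-- Directions for the edges of a ladder in which the two horizontal edges between consecutive
columns point in opposite directions: `rail i` is the row of the arc from column `i` to column
`i + 1`, and `rung i` is the row of the tail of the vertical arc in column `i`. -/
@[ext]
structure LadderPattern where
  rail : ℤ → Bool
  rung : ℤ → Bool

namespace LadderPattern

/-- The arcs of a ladder with coordinates `col` and `row` directed by a pattern. -/
def Arc (w : LadderPattern) (col : V → ℤ) (row : V → Bool) (p q : V) : Prop :=
  (col q = col p + 1 ∧ row q = row p ∧ row p = w.rail (col p)) ∨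
  (col p = col q + 1 ∧ row q = row p ∧ row p ≠ w.rail (col q)) ∨
  (col q = col p ∧ row q ≠ row p ∧ row p = w.rung (col p))

/-- Column `i` closes to the right: its vertical arc runs from the head of the arc coming from
column `i - 1` to the tail of the arc going back there, so that rightward excursions can turn
around in column `i`. -/
def ClosesRight (w : LadderPattern) (i : ℤ) : Prop :=
  w.rung i = w.rail (i - 1)

/-- The mirror image of `ClosesRight`: leftward excursions can turn around in column `i`. -/
def ClosesLeft (w : LadderPattern) (i : ℤ) : Prop :=
  w.rung i ≠ w.rail i

/-- A pattern giving a strong orientation of the ladder on the columns `lo, …, hi`. The values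
`rail (lo - 1)` and `rail hi`, which correspond to no edge, are fixed by convention. -/
structure Valid (w : LadderPattern) (lo hi : ℤ) : Prop where
  lt : lo < hi
  not_closesRight_lo : ¬ w.ClosesRight lo
  not_closesLeft_hi : ¬ w.ClosesLeft hi
  closes : ∀ i, lo ≤ i → i ≤ hi → w.ClosesLeft i ∨ w.ClosesRight i

/-- The left-right mirror image of a pattern. -/
def reflect (w : LadderPattern) : LadderPattern where
  rail i := !w.rail (-i - 1)
  rung i := w.rung (-i)

end LadderPattern

section Reflection

variable {col : V → ℤ} {row : V → Bool} {lo hi : ℤ} {w : LadderPattern}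

theorem LadderCoords.reflect (L : LadderCoords col row lo hi) :
    LadderCoords (fun p => -col p) row (-hi) (-lo) where
  ext p q hcol := L.ext p q (neg_injective hcol)
  exists_vertex i hlo hhi x := by
    obtain ⟨p, hp, hx⟩ := L.exists_vertex (-i) (by omega) (by omega) x
    exact ⟨p, by omega, hx⟩
  lo_le_col p := neg_le_neg (L.col_le_hi p)
  col_le_hi p := neg_le_neg (L.lo_le_col p)

namespace LadderPattern

@[simp]
theorem reflect_reflect (w : LadderPattern) : w.reflect.reflect = w := by
  ext i <;> simp [reflect]

@[simp]
theorem closesRight_reflect {i : ℤ} : w.reflect.ClosesRight i ↔ w.ClosesLeft (-i) := by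
  simp [ClosesRight, ClosesLeft, reflect, Bool.eq_not]

@[simp]
theorem closesLeft_reflect {i : ℤ} : w.reflect.ClosesLeft i ↔ w.ClosesRight (-i) := by
  simp [ClosesRight, ClosesLeft, reflect]

theorem Valid.reflect (hw : w.Valid lo hi) : w.reflect.Valid (-hi) (-lo) where
  lt := neg_lt_neg hw.lt
  not_closesRight_lo := by simpa using hw.not_closesLeft_hi
  not_closesLeft_hi := by simpa using hw.not_closesRight_lo
  closes i hlo hhi := by simpa [or_comm] using hw.closes (-i) (by omega) (by omega)

theorem arc_reflect (w : LadderPattern) (col : V → ℤ) (row : V → Bool) :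
    w.reflect.Arc (fun p => -col p) row = w.Arc col row := by
  have hneg : ∀ p q, -col q = -col p + 1 ↔ col p = col q + 1 := fun p q => by omega
  ext p q
  simp only [Arc, hneg, reflect, neg_neg, neg_inj, Bool.eq_not, Bool.ne_not]
  rw [or_left_comm]
  refine or_congr (and_congr_right fun hc => ?_) (or_congr_left (and_congr_right fun hc => ?_)) <;>
    simp [hc]

theorem Valid.closesLeft_lo (hw : w.Valid lo hi) : w.ClosesLeft lo :=
  (hw.closes lo le_rfl hw.lt.le).resolve_right hw.not_closesRight_lo

theorem Valid.closesRight_hi (hw : w.Valid lo hi) : w.ClosesRight hi :=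
  (hw.closes hi hw.lt.le le_rfl).resolve_left hw.not_closesLeft_hi

theorem Valid.rail_eq_of_not_closesRight (hw : w.Valid lo hi) {b i : ℤ} (hb : lo ≤ b)
    (hbi : b ≤ i) (hi_le : i ≤ hi) (hne : ∀ j, b < j → j ≤ i → ¬ w.ClosesRight j) :
    w.rail i = w.rail b := by
  induction i, hbi using Int.leInduction with
  | base => rfl
  | succ i hbi ih =>
    have hright := hne (i + 1) (by omega) le_rfl
    have hleft := (hw.closes (i + 1) (by omega) hi_le).resolve_right hright
    have hih := ih (by omega) fun j hbj hji => hne j hbj (by omega)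
    rw [ClosesRight, add_sub_cancel_right, hih] at hright
    exact bool_eq_of_ne hleft.symm (Ne.symm hright)

theorem Valid.rung_ne_rail_of_not_closesRight (hw : w.Valid lo hi) {b i : ℤ} (hb : lo ≤ b)
    (hbi : b ≤ i) (hi_le : i ≤ hi) (hleft : w.ClosesLeft b)
    (hne : ∀ j, b < j → j ≤ i → ¬ w.ClosesRight j) : w.rung i ≠ w.rail b := by
  rcases hbi.eq_or_lt with rfl | hlt
  · exact hleft
  · rw [← hw.rail_eq_of_not_closesRight hb hbi hi_le hne]
    exact (hw.closes i (by omega) hi_le).resolve_right (hne i hlt le_rfl)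

end LadderPattern

end Reflection

section LadderWalks

variable {col : V → ℤ} {row : V → Bool} {lo hi : ℤ} {w : LadderPattern} {p q : V}

namespace LadderPattern

theorem Arc.of_rung (hcol : col q = col p) (hrow : row q ≠ row p)
    (hrung : row p = w.rung (col p)) : w.Arc col row p q :=
  Or.inr (Or.inr ⟨hcol, hrow, hrung⟩)

theorem hasDirWalk_right (L : LadderCoords col row lo hi) {t : ℕ} (hcol : col q = col p + t)
    (hrow : row q = row p) (hrail : ∀ i, col p ≤ i → i < col q → w.rail i = row p) :
    HasDirWalk (w.Arc col row) t p q := by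
  induction t generalizing q with
  | zero =>
    obtain rfl := L.ext p q (by omega) hrow.symm
    exact .refl _ p
  | succ t ih =>
    have hlo := L.lo_le_col p
    have hhi := L.col_le_hi q
    obtain ⟨z, hz_col, hz_row⟩ := L.exists_vertex (col p + t) (by omega) (by omega) (row p)
    refine (ih hz_col hz_row fun i hpi hiz => hrail i hpi (by omega)).trans (.single (Or.inl ?_))
    exact ⟨by omega, hrow.trans hz_row.symm,
      hz_row.trans (hrail _ (by omega) (by omega)).symm⟩

theorem hasDirWalk_left (L : LadderCoords col row lo hi) {t : ℕ} (hcol : col p = col q + t)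
    (hrow : row q = row p) (hrail : ∀ i, col q ≤ i → i < col p → w.rail i ≠ row p) :
    HasDirWalk (w.Arc col row) t p q := by
  rw [← w.arc_reflect]
  refine hasDirWalk_right L.reflect (by omega) hrow fun i hpi hiq => ?_
  exact Bool.not_eq.2 <| hrail (-i - 1) (by omega) (by omega)

/-- The turning point `z` is exposed so that convexity can be applied to the detour. -/
theorem Valid.exists_detour_right (hw : w.Valid lo hi) (L : LadderCoords col row lo hi) {e : ℤ}
    (hcol : col q = col p) (hrow : row q ≠ row p) (hp : row p = w.rail (col p))
    (hpe : col p < e) (he : e ≤ hi) (hright : w.ClosesRight e) :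
    ∃ k l z, ((k + l : ℕ) : ℤ) ≤ 2 * (e - col p) + 1 ∧ col p < col z ∧
      HasDirWalk (w.Arc col row) k p z ∧ HasDirWalk (w.Arc col row) l z q := by
  have hlo := L.lo_le_col p
  obtain ⟨b, ⟨hpb, hb⟩, hleast⟩ := Int.exists_least_of_bdd
    (P := fun i => col p < i ∧ w.ClosesRight i) ⟨col p, fun i hi => hi.1.le⟩ ⟨e, hpe, hright⟩
  have hbe : b ≤ e := hleast e ⟨hpe, hright⟩
  have hrail : ∀ i, col p ≤ i → i < b → w.rail i = row p := fun i hpi hib => by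
    rw [hp]
    refine hw.rail_eq_of_not_closesRight hlo hpi (by omega) fun j hpj hji hj => ?_
    have := hleast j ⟨hpj, hj⟩
    omega
  obtain ⟨z, hz_col, hz_row⟩ := L.exists_vertex b (by omega) (by omega) (row p)
  obtain ⟨y, hy_col, hy_row⟩ := L.exists_vertex b (by omega) (by omega) (row q)
  have hturn : w.Arc col row z y :=
    .of_rung (by omega) (by rwa [hy_row, hz_row])
      (by rw [hz_row, hz_col, hb, hrail _ (by omega) (by omega)])
  have hpz : HasDirWalk (w.Arc col row) (b - col p).toNat p z :=
    hasDirWalk_right L (by omega) hz_row fun i hpi hiz => hrail i hpi (by omega)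
  have hyq : HasDirWalk (w.Arc col row) (b - col p).toNat y q :=
    hasDirWalk_left L (by omega) hy_row.symm fun i hpi hiz => by
      rw [hrail i (by omega) (by omega), hy_row]
      exact hrow.symm
  exact ⟨_, _, z, by omega, by omega, hpz, (HasDirWalk.single hturn).trans hyq⟩

theorem Valid.exists_detour_left (hw : w.Valid lo hi) (L : LadderCoords col row lo hi) {a : ℤ}
    (hcol : col q = col p) (hrow : row q ≠ row p) (hp : row p ≠ w.rail (col p - 1))
    (hap : a < col p) (ha : lo ≤ a) (hleft : w.ClosesLeft a) :
    ∃ k l z, ((k + l : ℕ) : ℤ) ≤ 2 * (col p - a) + 1 ∧ col z < col p ∧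
      HasDirWalk (w.Arc col row) k p z ∧ HasDirWalk (w.Arc col row) l z q := by
  rw [← w.arc_reflect]
  obtain ⟨k, l, z, hlen, hz, hwalks⟩ := hw.reflect.exists_detour_right L.reflect (e := -a)
    (neg_inj.2 hcol) hrow (by simpa [LadderPattern.reflect, Bool.eq_not] using hp)
    (neg_lt_neg hap) (neg_le_neg ha) (by simpa using hleft)
  exact ⟨k, l, z, by omega, neg_lt_neg_iff.1 hz, hwalks⟩

end LadderPattern

/-- A walk confined to the right of column `col p` that joins the two vertices of that column must
get past the columns whose vertical arcs point the wrong way. -/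
theorem IsDirWalk.two_mul_add_one_le {k : ℕ} {f : ℕ → V}
    (hf : IsDirWalk (w.Arc col row) k f p q) (hcol : col q = col p) (hrow : row q ≠ row p)
    (hright : ∀ i ≤ k, col p ≤ col (f i)) {m : ℤ} (hm : 0 ≤ m)
    (hrung : ∀ i, col p ≤ i → i < col p + m → w.rung i ≠ row p) : 2 * m + 1 ≤ k := by
  -- The potential is a lower bound for the number of steps from `p`.
  let φ : V → ℤ := fun x =>
    if row x = row p then min (col x - col p) m
    else max (2 * m + 1 - (col x - col p)) (m + 1)
  have hφ : ∀ i < k, φ (f (i + 1)) ≤ φ (f i) + 1 := by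
    intro i hi
    have hcol_i := hright i hi.le
    have := hright (i + 1) hi
    have hrung_i := hrung (col (f i)) hcol_i
    rcases hf.2.2 i hi with ⟨hc, hr, -⟩ | ⟨hc, hr, -⟩ | ⟨hc, hr, hstart⟩
    · simp only [φ, hr]
      split_ifs <;> omega
    · simp only [φ, hr]
      split_ifs <;> omega
    · by_cases hrow_i : row (f i) = row p
      · have hm_le : col p + m ≤ col (f i) :=
          not_lt.1 fun hlt => hrung_i hlt (hstart.symm.trans hrow_i)
        simp only [φ, hrow_i, if_true, hrow_i ▸ hr, if_false]
        omega
      · have hrow_succ : row (f (i + 1)) = row p := bool_eq_of_ne hr (Ne.symm hrow_i)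
        simp only [φ, hrow_i, hrow_succ, if_true, if_false]
        omega
  have := hf.potential_le hφ
  simp only [φ, hrow, hcol, if_true, if_false, sub_self] at this
  omega

end LadderWalks

namespace LadderPattern

section StrongConnectivity

variable {col : V → ℤ} {row : V → Bool} {lo hi : ℤ} {w : LadderPattern} {p q : V}

namespace Valid

theorem dirReachable_of_col_eq (hw : w.Valid lo hi) (L : LadderCoords col row lo hi)
    (hcol : col q = col p) : DirReachable (w.Arc col row) p q := by
  by_cases hrow : row q = row p
  · obtain rfl := L.ext q p hcol hrow
    exact .refl _ q
  by_cases hrung : row p = w.rung (col p)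
  · exact .single (.of_rung hcol hrow hrung)
  suffices ∃ k l z, HasDirWalk (w.Arc col row) k p z ∧ HasDirWalk (w.Arc col row) l z q by
    obtain ⟨k, l, z, hpz, hzq⟩ := this
    exact ⟨k + l, hpz.trans hzq⟩
  rcases hw.closes (col p) (L.lo_le_col p) (L.col_le_hi p) with hleft | hright
  · have hlt : col p < hi := (L.col_le_hi p).lt_of_ne fun h => hw.not_closesLeft_hi (h ▸ hleft)
    obtain ⟨k, l, z, -, -, hwalks⟩ := hw.exists_detour_right L hcol hrow
      (bool_eq_of_ne hrung (Ne.symm hleft)) hlt le_rfl hw.closesRight_hi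
    exact ⟨k, l, z, hwalks⟩
  · have hlt : lo < col p :=
      (L.lo_le_col p).lt_of_ne fun h => hw.not_closesRight_lo (h ▸ hright)
    obtain ⟨k, l, z, -, -, hwalks⟩ := hw.exists_detour_left L hcol hrow
      (fun h => hrung (h.trans hright.symm)) hlt le_rfl hw.closesLeft_lo
    exact ⟨k, l, z, hwalks⟩

theorem dirReachable_of_col_le (hw : w.Valid lo hi) (L : LadderCoords col row lo hi)
    (hpq : col p ≤ col q) : DirReachable (w.Arc col row) p q := by
  obtain ⟨d, hd⟩ := Int.eq_ofNat_of_zero_le (sub_nonneg.2 hpq)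
  induction d generalizing q with
  | zero => exact hw.dirReachable_of_col_eq L (by omega)
  | succ d ih =>
    have hlo := L.lo_le_col p
    have hhi := L.col_le_hi q
    obtain ⟨y, hy_col, hy_row⟩ :=
      L.exists_vertex (col q - 1) (by omega) (by omega) (w.rail (col q - 1))
    obtain ⟨z, hz_col, hz_row⟩ := L.exists_vertex (col q) (by omega) hhi (w.rail (col q - 1))
    have hyz : w.Arc col row y z :=
      Or.inl ⟨by omega, by rw [hz_row, hy_row], by rw [hy_row, hy_col]⟩
    exact ((ih (by omega) (by omega)).trans (.single hyz)).trans
      (hw.dirReachable_of_col_eq L hz_col.symm)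

theorem strongConnected (hw : w.Valid lo hi) (L : LadderCoords col row lo hi) :
    StrongConnected (w.Arc col row) := by
  intro p q
  rcases le_total (col p) (col q) with hpq | hqp
  · exact hw.dirReachable_of_col_le L hpq
  · rw [← w.arc_reflect]
    exact hw.reflect.dirReachable_of_col_le L.reflect (neg_le_neg hqp)

end Valid

end StrongConnectivity

end LadderPattern

section ConvexSets

variable {col : V → ℤ} {row : V → Bool} {lo hi : ℤ} {w : LadderPattern} {p q : V} {C : Set V}

theorem LadderCoords.ncard_preimage_Icc (L : LadderCoords col row lo hi) {a b : ℤ} (ha : lo ≤ a)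
    (hb : b ≤ hi) : (col ⁻¹' Set.Icc a b).ncard = 2 * (b + 1 - a).toNat := by
  have hinj : Function.Injective fun p => (col p, row p) := fun p q h =>
    L.ext p q (congrArg Prod.fst h) (congrArg Prod.snd h)
  have himage : (fun p => (col p, row p)) '' (col ⁻¹' Set.Icc a b) = Set.Icc a b ×ˢ Set.univ := by
    ext ⟨i, x⟩
    simp only [Set.mem_image, Set.mem_preimage, Set.mem_prod, Set.mem_univ, and_true, Prod.mk.injEq]
    constructor
    · rintro ⟨p, hp, rfl, -⟩
      exact hp
    · intro hi
      obtain ⟨p, rfl, rfl⟩ := L.exists_vertex i (ha.trans hi.1) (hi.2.trans hb) x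
      exact ⟨p, hi, rfl, rfl⟩
  rw [← Set.ncard_image_of_injective _ hinj, himage, Set.ncard_prod, Set.ncard_univ,
    Nat.card_eq_fintype_card, Fintype.card_bool, ← Finset.coe_Icc, Set.ncard_coe_finset,
    Int.card_Icc, mul_comm]

namespace LadderPattern

theorem Arc.of_col_lt (h : w.Arc col row p q) (hlt : col p < col q) :
    col q = col p + 1 ∧ row q = row p ∧ row p = w.rail (col p) := by
  rcases h with h | ⟨hcol, -⟩ | ⟨hcol, -⟩
  · exact h
  all_goals omega

theorem Arc.of_col_gt (h : w.Arc col row p q) (hgt : col q < col p) :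
    col p = col q + 1 ∧ row q = row p ∧ row p ≠ w.rail (col q) := by
  rcases h with ⟨hcol, -⟩ | h | ⟨hcol, -⟩
  · omega
  · exact h
  · omega

namespace Valid

theorem mem_of_row_eq_rail (hw : w.Valid lo hi) (L : LadderCoords col row lo hi)
    (hC : DConvex (w.Arc col row) C) (hp : p ∈ C) (hq : q ∈ C) {i : ℤ} (hpi : col p ≤ i)
    (hiq : i < col q) {z : V} (hcol : col z = i ∨ col z = i + 1) (hrow : row z = w.rail i) :
    z ∈ C := by
  obtain ⟨k, f, hf⟩ := (hw.strongConnected L p q).exists_isGeodesic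
  obtain ⟨j, hj, hj_le, hj_gt⟩ :=
    hf.1.exists_step_out (S := {x | col x ≤ i}) hpi (not_le.2 hiq)
  simp only [Set.mem_ofPred_eq, not_le] at hj_le hj_gt
  obtain ⟨hcol_j, hrow_j, hrail_j⟩ := (hf.1.2.2 j hj).of_col_lt (hj_le.trans_lt hj_gt)
  obtain rfl : i = col (f j) := by omega
  rcases hcol with hz | hz
  · rw [L.ext z (f j) hz (by rw [hrow, hrail_j])]
    exact hC.2 p hp q hq k f hf j hj.le
  · rw [L.ext z (f (j + 1)) (by omega) (by rw [hrow, hrow_j, hrail_j])]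
    exact hC.2 p hp q hq k f hf (j + 1) hj

theorem preimage_Icc_subset (hw : w.Valid lo hi) (L : LadderCoords col row lo hi)
    (hC : DConvex (w.Arc col row) C) (hp : p ∈ C) (hq : q ∈ C) (hpq : col p < col q) :
    col ⁻¹' Set.Icc (col p) (col q) ⊆ C := by
  rintro z ⟨hpz, hzq⟩
  obtain ⟨i, hpi, hiq, hz⟩ : ∃ i, col p ≤ i ∧ i < col q ∧ (col z = i ∨ col z = i + 1) :=
    ⟨min (col z) (col q - 1), by omega, by omega, by omega⟩
  by_cases hrow : row z = w.rail i
  · exact hw.mem_of_row_eq_rail L hC hp hq hpi hiq hz hrow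
  · rw [← w.arc_reflect] at hC
    refine hw.reflect.mem_of_row_eq_rail L.reflect hC hq hp (i := -i - 1) (by omega) (by omega)
      (by omega) ?_
    simpa [LadderPattern.reflect, Bool.eq_not] using hrow

theorem exists_mem_col_ne (hw : w.Valid lo hi) (L : LadderCoords col row lo hi)
    (hC : DConvex (w.Arc col row) C) (hp : p ∈ C) (hq : q ∈ C) (hpq : p ≠ q)
    (hrung : row p ≠ w.rung (col p)) : ∃ x ∈ C, col x ≠ col p := by
  obtain ⟨k, f, hf⟩ := (hw.strongConnected L p q).exists_isGeodesic
  have hk := hf.1.length_pos hpq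
  refine ⟨f 1, hC.2 p hp q hq k f hf 1 hk, ?_⟩
  rcases hf.1.arc_first hk with ⟨hcol, -⟩ | ⟨hcol, -⟩ | ⟨-, -, htail⟩
  · omega
  · omega
  · exact absurd htail hrung

theorem exists_col_lt (hw : w.Valid lo hi) (L : LadderCoords col row lo hi)
    (hC : DConvex (w.Arc col row) C) (hnt : C.Nontrivial) : ∃ p ∈ C, ∃ q ∈ C, col p < col q := by
  suffices ∃ p ∈ C, ∃ q ∈ C, col q ≠ col p by
    obtain ⟨p, hp, q, hq, hne⟩ := this
    rcases hne.lt_or_gt with hlt | hlt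
    exacts [⟨q, hq, p, hp, hlt⟩, ⟨p, hp, q, hq, hlt⟩]
  obtain ⟨p, hp, q, hq, hpq⟩ := hnt
  by_contra! hcol
  have hrow : row p ≠ row q := fun h => hpq (L.ext p q (hcol q hq p hp) h)
  by_cases hrung : row p = w.rung (col p)
  · obtain ⟨x, hx, hxq⟩ := hw.exists_mem_col_ne L hC hq hp hpq.symm
      (by rw [hcol p hp q hq, ← hrung]; exact hrow.symm)
    exact hxq (hcol q hq x hx)
  · obtain ⟨x, hx, hxp⟩ := hw.exists_mem_col_ne L hC hp hq hpq hrung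
    exact hxp (hcol p hp x hx)

theorem exists_eq_preimage_Icc (hw : w.Valid lo hi) (L : LadderCoords col row lo hi)
    (hC : DConvex (w.Arc col row) C) (hnt : C.Nontrivial) :
    ∃ a b, lo ≤ a ∧ a < b ∧ b ≤ hi ∧ C = col ⁻¹' Set.Icc a b := by
  obtain ⟨p, hp, q, hq, hpq⟩ := hw.exists_col_lt L hC hnt
  obtain ⟨_, ⟨x, hx, rfl⟩, hleast⟩ := Int.exists_least_of_bdd (P := (· ∈ col '' C))
    ⟨lo, by rintro _ ⟨x, -, rfl⟩; exact L.lo_le_col x⟩ ⟨_, p, hp, rfl⟩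
  obtain ⟨_, ⟨y, hy, rfl⟩, hgreatest⟩ := Int.exists_greatest_of_bdd (P := (· ∈ col '' C))
    ⟨hi, by rintro _ ⟨x, -, rfl⟩; exact L.col_le_hi x⟩ ⟨_, p, hp, rfl⟩
  replace hleast : ∀ z ∈ C, col x ≤ col z := fun z hz => hleast _ ⟨z, hz, rfl⟩
  replace hgreatest : ∀ z ∈ C, col z ≤ col y := fun z hz => hgreatest _ ⟨z, hz, rfl⟩
  have hxy : col x < col y := (hleast p hp).trans_lt (hpq.trans_le (hgreatest q hq))
  exact ⟨col x, col y, L.lo_le_col x, hxy, L.col_le_hi y,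
    Set.Subset.antisymm (fun z hz => ⟨hleast z hz, hgreatest z hz⟩)
      (hw.preimage_Icc_subset L hC hx hy hxy)⟩

end Valid

end LadderPattern

end ConvexSets

section ClosedEnds

namespace LadderPattern

/-- The criterion for the columns `lo, …, b` to form a convex set: a geodesic leaving them through
column `b` would have to come back to that column, and going through the vertical arc of column `b`
or turning around in column `a` is shorter than any turn to the right of `b`. -/
def PrefixClosed (w : LadderPattern) (lo b : ℤ) : Prop :=
  w.ClosesRight b ∧ (w.ClosesLeft b →
    ∃ a, lo ≤ a ∧ a < b ∧ w.ClosesLeft a ∧ ∀ i, b < i → i ≤ 2 * b - a → ¬ w.ClosesRight i)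

/-- The mirror image of `PrefixClosed`: the criterion for the columns `a, …, hi`. -/
def SuffixClosed (w : LadderPattern) (hi a : ℤ) : Prop :=
  w.ClosesLeft a ∧ (w.ClosesRight a →
    ∃ b, a < b ∧ b ≤ hi ∧ w.ClosesRight b ∧ ∀ i, 2 * a - b ≤ i → i < a → ¬ w.ClosesLeft i)

@[simp]
theorem prefixClosed_reflect {w : LadderPattern} {lo b : ℤ} :
    w.reflect.PrefixClosed lo b ↔ w.SuffixClosed (-lo) (-b) := by
  simp only [PrefixClosed, SuffixClosed, closesRight_reflect, closesLeft_reflect]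
  refine and_congr_right fun _ => imp_congr_right fun _ => ?_
  constructor
  · rintro ⟨a, hlo, hab, hright, hnone⟩
    refine ⟨-a, by omega, by omega, hright, fun i hai hib => ?_⟩
    simpa using hnone (-i) (by omega) (by omega)
  · rintro ⟨a, hba, ha, hright, hnone⟩
    refine ⟨-a, by omega, by omega, by simpa using hright, fun i hbi hia => ?_⟩
    exact hnone (-i) (by omega) (by omega)

@[simp]
theorem suffixClosed_reflect {w : LadderPattern} {hi a : ℤ} :
    w.reflect.SuffixClosed hi a ↔ w.PrefixClosed (-hi) (-a) := by
  simpa using (prefixClosed_reflect (w := w.reflect) (lo := -hi) (b := -a)).symm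

variable {col : V → ℤ} {row : V → Bool} {lo hi : ℤ} {w : LadderPattern} {p q : V}

namespace Valid

theorem exists_shorter_of_prefixClosed (hw : w.Valid lo hi) (L : LadderCoords col row lo hi)
    {b : ℤ} (hb : b < hi) (hclosed : w.PrefixClosed lo b) (hp : col p = b) (hq : col q = b)
    (hrow_p : row p = w.rail b) (hrow_q : row q ≠ w.rail b) {k : ℕ} {f : ℕ → V}
    (hf : IsDirWalk (w.Arc col row) k f p q) (hk : 1 < k) (hout : ∀ i ≤ k, b ≤ col (f i)) :
    ∃ m < k, HasDirWalk (w.Arc col row) m p q := by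
  obtain ⟨hright, hleft_imp⟩ := hclosed
  have hrow : row q ≠ row p := hrow_p ▸ hrow_q
  have hlo : lo ≤ b := hp ▸ L.lo_le_col p
  by_cases hleft : w.ClosesLeft b
  · obtain ⟨a, ha, hab, hleft_a, hnone⟩ := hleft_imp hleft
    have hhi : 2 * b - a < hi := not_le.1 fun h => hnone hi hb h hw.closesRight_hi
    obtain ⟨m, l, z, hlen, -, hpz, hzq⟩ := hw.exists_detour_left L (hq.trans hp.symm) hrow
      (by rw [hrow_p, hp, ← hright]; exact hleft.symm) (hp ▸ hab) ha hleft_a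
    have hlong := hf.two_mul_add_one_le (hq.trans hp.symm) hrow (hp ▸ hout) (m := b - a + 1)
      (by omega) fun i hbi hi_lt => hrow_p ▸
        hw.rung_ne_rail_of_not_closesRight hlo (by omega) (by omega) hleft
          fun j hbj hji => hnone j hbj (by omega)
    exact ⟨m + l, by omega, hpz.trans hzq⟩
  · have hrung : w.rung b = w.rail b := not_not.1 hleft
    exact ⟨1, hk, .single (.of_rung (hq.trans hp.symm) hrow (by rw [hrow_p, hp, hrung]))⟩

theorem dconvex_prefix (hw : w.Valid lo hi) (L : LadderCoords col row lo hi) {b : ℤ} (hlo : lo ≤ b)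
    (hb : b < hi) (hclosed : w.PrefixClosed lo b) :
    DConvex (w.Arc col row) (col ⁻¹' Set.Icc lo b) := by
  obtain ⟨x, hx, -⟩ := L.exists_vertex b hlo hb.le true
  refine dconvex_of_geodesic_interior_mem ⟨x, L.lo_le_col x, hx.le⟩ ?_
  rintro u ⟨-, hu⟩ v ⟨-, hv⟩ k f hk hf
  by_contra! hstay
  have hout : ∀ i, 0 < i → i < k → b < col (f i) := fun i hi hik =>
    not_le.1 fun h => hstay i hi hik ⟨L.lo_le_col _, h⟩
  have hfirst := hout 1 one_pos hk
  have hlast := hout (k - 1) (by omega) (by omega)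
  obtain ⟨hcol_first, -, hrail_u⟩ := (hf.1.arc_first (by omega)).of_col_lt (hu.trans_lt hfirst)
  obtain ⟨hcol_last, hrow_last, hrail_v⟩ :=
    (hf.1.arc_last (by omega)).of_col_gt (hv.trans_lt hlast)
  have hu_col : col u = b := by omega
  have hv_col : col v = b := by omega
  have hout_le : ∀ i ≤ k, b ≤ col (f i) := by
    intro i hik
    rcases i.eq_zero_or_pos with rfl | hi
    · exact hf.1.1.symm ▸ hu_col.ge
    · rcases hik.eq_or_lt with rfl | hlt
      · exact hf.1.2.1.symm ▸ hv_col.ge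
      · exact (hout i hi hlt).le
  obtain ⟨m, hmk, g, hg⟩ := hw.exists_shorter_of_prefixClosed L hb hclosed hu_col hv_col
    (hu_col ▸ hrail_u) (hrow_last ▸ hv_col ▸ hrail_v) hf.1 hk hout_le
  exact absurd (hf.2 m g hg) (not_le.2 hmk)

theorem dconvex_suffix (hw : w.Valid lo hi) (L : LadderCoords col row lo hi) {a : ℤ} (ha : lo < a)
    (hhi : a ≤ hi) (hclosed : w.SuffixClosed hi a) :
    DConvex (w.Arc col row) (col ⁻¹' Set.Icc a hi) := by
  have hconv := hw.reflect.dconvex_prefix L.reflect (b := -a) (by omega) (by omega)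
    (by simpa using hclosed)
  have hset : (fun p => -col p) ⁻¹' Set.Icc (-hi) (-a) = col ⁻¹' Set.Icc a hi := by
    ext p
    simp [and_comm]
  rwa [w.arc_reflect, hset] at hconv

theorem closesLeft_of_dconvex (hw : w.Valid lo hi) (L : LadderCoords col row lo hi) {a b : ℤ}
    (ha : lo ≤ a) (hab : a < b) (hb : b ≤ hi)
    (hC : DConvex (w.Arc col row) (col ⁻¹' Set.Icc a b)) : w.ClosesLeft a := by
  obtain ⟨p, hp, hrow_p⟩ := L.exists_vertex a ha (by omega) (!w.rung a)
  obtain ⟨q, hq, hrow_q⟩ := L.exists_vertex a ha (by omega) (w.rung a)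
  have hpq : p ≠ q := by rintro rfl; simp [hrow_p] at hrow_q
  obtain ⟨k, f, hf⟩ := (hw.strongConnected L p q).exists_isGeodesic
  have hk := hf.1.length_pos hpq
  have hfirst : a ≤ col (f 1) :=
    (hC.2 p (by simp [hp, hab.le]) q (by simp [hq, hab.le]) k f hf 1 hk).1
  rcases hf.1.arc_first hk with ⟨-, -, h⟩ | ⟨h, -⟩ | ⟨-, -, h⟩
  · rw [hrow_p, hp, Bool.not_eq] at h
    exact h
  · omega
  · simp [hrow_p, hp] at h

theorem suffixClosed_of_dconvex (hw : w.Valid lo hi) (L : LadderCoords col row lo hi) {a b : ℤ}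
    (ha : lo < a) (hab : a < b) (hb : b ≤ hi)
    (hC : DConvex (w.Arc col row) (col ⁻¹' Set.Icc a b)) : w.SuffixClosed hi a := by
  have hleft := hw.closesLeft_of_dconvex L ha.le hab hb hC
  refine ⟨hleft, fun hright => ?_⟩
  obtain ⟨e, ⟨hae, hright_e⟩, hleast⟩ := Int.exists_least_of_bdd
    (P := fun i => a < i ∧ w.ClosesRight i) ⟨a, fun i hi => hi.1.le⟩
    ⟨hi, by omega, hw.closesRight_hi⟩
  have he : e ≤ hi := hleast hi ⟨by omega, hw.closesRight_hi⟩
  obtain ⟨p, rfl, hrow_p⟩ := L.exists_vertex a ha.le (by omega) (w.rail a)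
  obtain ⟨q, hcol, hrow_q⟩ := L.exists_vertex (col p) ha.le (by omega) (w.rung (col p))
  have hrow : row q ≠ row p := by rw [hrow_p, hrow_q]; exact hleft
  have hpC : p ∈ col ⁻¹' Set.Icc (col p) b := ⟨le_rfl, hab.le⟩
  have hqC : q ∈ col ⁻¹' Set.Icc (col p) b := ⟨hcol.ge, hcol ▸ hab.le⟩
  obtain ⟨k, f, hf⟩ := (hw.strongConnected L p q).exists_isGeodesic
  have hlong : 2 * (e - col p) + 1 ≤ k := hf.1.two_mul_add_one_le hcol hrow
    (fun i hi => (hC.2 p hpC q hqC k f hf i hi).1) (by omega)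
    fun i hai hie => hrow_p ▸ hw.rung_ne_rail_of_not_closesRight ha.le hai (by omega) hleft
      fun j haj hji hj => by have := hleast j ⟨haj, hj⟩; omega
  refine ⟨e, hae, he, hright_e, fun i hei hia hleft_i => ?_⟩
  obtain ⟨c, hc, hic, hca, hleft_c⟩ : ∃ c, lo ≤ c ∧ i ≤ c ∧ c < col p ∧ w.ClosesLeft c := by
    rcases le_total lo i with h | h
    exacts [⟨i, h, le_rfl, hia, hleft_i⟩, ⟨lo, le_rfl, h, ha, hw.closesLeft_lo⟩]
  obtain ⟨m, l, z, hlen, hz, hpz, hzq⟩ := hw.exists_detour_left L hcol hrow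
    (by rw [← hright, ← hrow_q]; exact hrow.symm) hca hc hleft_c
  have hzC := hC.mem_of_hasDirWalk hpC hqC hpz hzq fun t ⟨g, hg⟩ => by
    have := hf.2 t g hg
    omega
  exact absurd hzC.1 (not_le.2 hz)

theorem prefixClosed_of_dconvex (hw : w.Valid lo hi) (L : LadderCoords col row lo hi) {a b : ℤ}
    (ha : lo ≤ a) (hab : a < b) (hb : b < hi)
    (hC : DConvex (w.Arc col row) (col ⁻¹' Set.Icc a b)) : w.PrefixClosed lo b := by
  have hset : (fun p => -col p) ⁻¹' Set.Icc (-b) (-a) = col ⁻¹' Set.Icc a b := by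
    ext p
    simp [and_comm]
  rw [← w.arc_reflect, ← hset] at hC
  simpa using hw.reflect.suffixClosed_of_dconvex L.reflect (by omega) (by omega) (by omega) hC

end Valid

end LadderPattern

end ClosedEnds

section CyclicSquares

namespace LadderPattern

variable {w : LadderPattern} {lo hi m i : ℤ}

/-- The square formed by columns `i` and `i + 1` is a directed cycle. -/
def CyclicSquare (w : LadderPattern) (i : ℤ) : Prop :=
  w.ClosesLeft i ∧ w.ClosesRight (i + 1)

@[simp]
theorem cyclicSquare_reflect : w.reflect.CyclicSquare i ↔ w.CyclicSquare (-i - 1) := by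
  rw [CyclicSquare, CyclicSquare, closesLeft_reflect, closesRight_reflect, neg_add', sub_add_cancel,
    and_comm]

theorem CyclicSquare.not_prefixClosed (h : w.CyclicSquare i) : ¬ w.PrefixClosed lo i := by
  rintro ⟨-, himp⟩
  obtain ⟨a, -, hai, -, hnone⟩ := himp h.1
  exact hnone (i + 1) (by omega) (by omega) h.2

theorem CyclicSquare.not_suffixClosed (h : w.CyclicSquare i) : ¬ w.SuffixClosed hi (i + 1) := by
  rintro ⟨-, himp⟩
  obtain ⟨b, hib, -, -, hnone⟩ := himp h.2
  exact hnone i (by omega) (by omega) h.1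

namespace Valid

theorem closesLeft_of_not_prefixClosed (hw : w.Valid lo hi) (hlo : lo ≤ i) (hhi : i ≤ hi)
    (h : ¬ w.PrefixClosed lo i) : w.ClosesLeft i := by
  by_contra hleft
  exact h ⟨(hw.closes i hlo hhi).resolve_left hleft, fun h => absurd h hleft⟩

theorem closesRight_of_not_suffixClosed (hw : w.Valid lo hi) (hlo : lo ≤ i) (hhi : i ≤ hi)
    (h : ¬ w.SuffixClosed hi i) : w.ClosesRight i := by
  by_contra hright
  exact h ⟨(hw.closes i hlo hhi).resolve_right hright, fun h => absurd h hright⟩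

theorem cyclicSquare_of_ge (hw : w.Valid lo hi) (hm : lo ≤ m) (hsq : w.CyclicSquare m)
    (hprefix : ∀ b, m < b → b < hi → ¬ w.PrefixClosed lo b) (hmi : m ≤ i) (hi_lt : i < hi) :
    w.CyclicSquare i := by
  induction i, hmi using Int.leInduction with
  | base => exact hsq
  | succ i hmi ih =>
    have hnot := hprefix (i + 1) (by omega) hi_lt
    have hleft := hw.closesLeft_of_not_prefixClosed (by omega) hi_lt.le hnot
    refine ⟨hleft, ?_⟩
    by_contra hright
    refine hnot ⟨(ih (by omega)).2, fun _ => ⟨i, by omega, by omega, (ih (by omega)).1, ?_⟩⟩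
    intro j hij hji
    obtain rfl : j = i + 1 + 1 := by omega
    exact hright

theorem cyclicSquare_of_le (hw : w.Valid lo hi) (hm : m < hi) (hsq : w.CyclicSquare m)
    (hsuffix : ∀ a, lo < a → a ≤ m → ¬ w.SuffixClosed hi a) (hlo : lo ≤ i) (him : i ≤ m) :
    w.CyclicSquare i := by
  have hmirror := hw.reflect.cyclicSquare_of_ge (m := -m - 1) (i := -i - 1) (by omega)
    (by simpa using hsq) (fun b hmb hb => by
      simpa using hsuffix (-b) (by omega) (by omega)) (by omega) (by omega)
  simpa using hmirror

theorem cyclicSquare_of_not_closed (hw : w.Valid lo hi) (hlo : lo ≤ m) (hhi : m < hi)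
    (hprefix : ∀ b, m ≤ b → b < hi → ¬ w.PrefixClosed lo b)
    (hsuffix : ∀ a, lo < a → a ≤ m + 1 → ¬ w.SuffixClosed hi a) (hlo_i : lo ≤ i) (hi_lt : i < hi) :
    w.CyclicSquare i := by
  have hsq : w.CyclicSquare m :=
    ⟨hw.closesLeft_of_not_prefixClosed hlo hhi.le (hprefix m le_rfl hhi),
      hw.closesRight_of_not_suffixClosed (by omega) hhi (hsuffix (m + 1) (by omega) le_rfl)⟩
  rcases le_total m i with hmi | him
  · exact hw.cyclicSquare_of_ge hlo hsq (fun b hb => hprefix b hb.le) hmi hi_lt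
  · exact hw.cyclicSquare_of_le hhi hsq (fun a ha ham => hsuffix a ha (by omega)) hlo_i him

end Valid

/-- The first `m` or the last `m` columns of the ladder form a convex set. -/
def HasClosedEnd (w : LadderPattern) (lo hi m : ℤ) : Prop :=
  w.PrefixClosed lo (lo + m - 1) ∨ w.SuffixClosed hi (hi + 1 - m)

theorem not_hasClosedEnd_of_cyclicSquare (hsq : ∀ i, lo ≤ i → i < hi → w.CyclicSquare i)
    (hm : 1 ≤ m) (hm_lt : m < hi + 1 - lo) : ¬ w.HasClosedEnd lo hi m := by
  rintro (hprefix | hsuffix)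
  · exact (hsq _ (by omega) (by omega)).not_prefixClosed hprefix
  · rw [show hi + 1 - m = hi - m + 1 by omega] at hsuffix
    exact (hsq _ (by omega) (by omega)).not_suffixClosed hsuffix

theorem HasClosedEnd.exists_large (hw : w.Valid lo hi) (hm : 1 ≤ m) (hm_lt : m < hi + 1 - lo)
    (hclosed : w.HasClosedEnd lo hi m) :
    ∃ j, (hi + 1 - lo) / 2 ≤ j ∧ j < hi + 1 - lo ∧ w.HasClosedEnd lo hi j := by
  by_contra! hnone
  have hlt := hw.lt
  refine not_hasClosedEnd_of_cyclicSquare (fun i hlo_i hi_lt => hw.cyclicSquare_of_not_closed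
    (m := lo + (hi + 1 - lo) / 2 - 1) (by omega) (by omega) ?_ ?_ hlo_i hi_lt) hm hm_lt hclosed
  · intro b hmb hb hprefix
    exact hnone (b + 1 - lo) (by omega) (by omega) (.inl (by ring_nf; exact hprefix))
  · intro a ha ham hsuffix
    exact hnone (hi + 1 - a) (by omega) (by omega) (.inr (by ring_nf; exact hsuffix))

end LadderPattern

end CyclicSquares

section ConvexityNumber

variable {col : V → ℤ} {row : V → Bool} {lo hi : ℤ}

theorem LadderCoords.nontrivial (L : LadderCoords col row lo hi) (h : lo ≤ hi) : Nontrivial V := by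
  obtain ⟨p, -, hp⟩ := L.exists_vertex lo le_rfl h true
  obtain ⟨q, -, hq⟩ := L.exists_vertex lo le_rfl h false
  exact ⟨p, q, by rintro rfl; simp [hp] at hq⟩

theorem LadderCoords.preimage_Icc_ne_univ (L : LadderCoords col row lo hi) {a b i : ℤ}
    (hlo : lo ≤ i) (hhi : i ≤ hi) (hi_notMem : i ∉ Set.Icc a b) :
    col ⁻¹' Set.Icc a b ≠ Set.univ := by
  obtain ⟨p, rfl, -⟩ := L.exists_vertex i hlo hhi true
  exact fun h => hi_notMem (h.ge (Set.mem_univ p))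

namespace LadderPattern

variable {w : LadderPattern}

theorem HasClosedEnd.exists_dconvex {m : ℤ} (hclosed : w.HasClosedEnd lo hi m)
    (hw : w.Valid lo hi) (L : LadderCoords col row lo hi) (hm : 1 ≤ m)
    (hm_lt : m < hi + 1 - lo) :
    ∃ C : Set V, DConvex (w.Arc col row) C ∧ C ≠ Set.univ ∧ (C.ncard : ℤ) = 2 * m := by
  rcases hclosed with hprefix | hsuffix
  · refine ⟨_, hw.dconvex_prefix L (by omega) (by omega) hprefix,
      L.preimage_Icc_ne_univ hw.lt.le le_rfl (by simp only [Set.mem_Icc]; omega), ?_⟩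
    rw [L.ncard_preimage_Icc le_rfl (by omega)]
    omega
  · refine ⟨_, hw.dconvex_suffix L (by omega) (by omega) hsuffix,
      L.preimage_Icc_ne_univ le_rfl hw.lt.le (by simp only [Set.mem_Icc]; omega), ?_⟩
    rw [L.ncard_preimage_Icc (by omega) le_rfl]
    omega

namespace Valid

theorem exists_hasClosedEnd_of_dconvex (hw : w.Valid lo hi) (L : LadderCoords col row lo hi)
    {C : Set V} (hC : DConvex (w.Arc col row) C) (hne : C ≠ Set.univ) (hnt : C.Nontrivial) :
    ∃ m, 2 ≤ m ∧ m < hi + 1 - lo ∧ w.HasClosedEnd lo hi m ∧ (C.ncard : ℤ) ≤ 2 * m := by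
  obtain ⟨a, b, ha, hab, hb, rfl⟩ := hw.exists_eq_preimage_Icc L hC hnt
  have hcard := L.ncard_preimage_Icc ha hb
  rcases hb.lt_or_eq with hlt | rfl
  · refine ⟨b + 1 - lo, by omega, by omega, .inl ?_, by omega⟩
    ring_nf
    exact hw.prefixClosed_of_dconvex L ha hab hlt hC
  · have hlt : lo < a := ha.lt_of_ne fun h =>
      hne (Set.eq_univ_of_forall fun p => ⟨h ▸ L.lo_le_col p, L.col_le_hi p⟩)
    refine ⟨b + 1 - a, by omega, by omega, .inr ?_, by omega⟩
    ring_nf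
    exact hw.suffixClosed_of_dconvex L hlt hab le_rfl hC

variable [Fintype V]

theorem two_mul_le_convexityNumber (hw : w.Valid lo hi) (L : LadderCoords col row lo hi) {m : ℤ}
    (hm : 1 ≤ m) (hm_lt : m < hi + 1 - lo) (hclosed : w.HasClosedEnd lo hi m) :
    2 * m ≤ convexityNumber (w.Arc col row) := by
  have := L.nontrivial hw.lt.le
  obtain ⟨C, hC, hne, hcard⟩ := hclosed.exists_dconvex hw L hm hm_lt
  have hle := (isGreatest_convexityNumber (w.Arc col row)).2 ⟨C, hC, hne, rfl⟩
  omega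

theorem convexityNumber_eq_one_or (hw : w.Valid lo hi) (L : LadderCoords col row lo hi) :
    convexityNumber (w.Arc col row) = 1 ∨ ∃ m, 2 ≤ m ∧ m < hi + 1 - lo ∧
      w.HasClosedEnd lo hi m ∧ (convexityNumber (w.Arc col row) : ℤ) = 2 * m := by
  have := L.nontrivial hw.lt.le
  obtain ⟨C, hC, hne, hcard⟩ := (isGreatest_convexityNumber (w.Arc col row)).1
  rw [← hcard]
  rcases C.subsingleton_or_nontrivial with hsub | hnt
  · obtain ⟨u, rfl⟩ := Set.exists_eq_singleton_iff_nonempty_subsingleton.2 ⟨hC.1, hsub⟩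
    exact .inl (Set.ncard_singleton u)
  · obtain ⟨m, hm, hm_lt, hclosed, hle⟩ := hw.exists_hasClosedEnd_of_dconvex L hC hne hnt
    have hge := hw.two_mul_le_convexityNumber L (by omega) hm_lt hclosed
    exact .inr ⟨m, hm, hm_lt, hclosed, by omega⟩

theorem convexityNumber_eq_one_of_cyclicSquare (hw : w.Valid lo hi)
    (L : LadderCoords col row lo hi) (hsq : ∀ i, lo ≤ i → i < hi → w.CyclicSquare i) :
    convexityNumber (w.Arc col row) = 1 :=
  (hw.convexityNumber_eq_one_or L).resolve_right fun ⟨_, hm, hm_lt, hclosed, _⟩ =>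
    not_hasClosedEnd_of_cyclicSquare hsq (by omega) hm_lt hclosed

theorem convexityNumber_eq_two_mul (hw : w.Valid lo hi) (L : LadderCoords col row lo hi) {j : ℤ}
    (hj : 1 ≤ j) (hj_lt : j < hi + 1 - lo) (hclosed : w.HasClosedEnd lo hi j)
    (hmax : ∀ m, j < m → m < hi + 1 - lo → ¬ w.HasClosedEnd lo hi m) :
    (convexityNumber (w.Arc col row) : ℤ) = 2 * j := by
  have hge := hw.two_mul_le_convexityNumber L hj hj_lt hclosed
  rcases hw.convexityNumber_eq_one_or L with hone | ⟨m, -, hm_lt, hclosed_m, hm⟩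
  · omega
  · have hmj : m ≤ j := not_lt.1 fun h => hmax m h hm_lt hclosed_m
    omega

theorem convexityNumber_eq_one_or_large (hw : w.Valid lo hi) (L : LadderCoords col row lo hi) :
    convexityNumber (w.Arc col row) = 1 ∨ ∃ j, 2 ≤ j ∧ (hi + 1 - lo) / 2 ≤ j ∧
      j < hi + 1 - lo ∧ (convexityNumber (w.Arc col row) : ℤ) = 2 * j := by
  refine (hw.convexityNumber_eq_one_or L).imp_right fun ⟨m, hm, hm_lt, hclosed, hcard⟩ => ?_
  obtain ⟨j, hj, hj_lt, hclosed_j⟩ := hclosed.exists_large hw (by omega) hm_lt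
  have hlt := hw.lt
  have hge := hw.two_mul_le_convexityNumber L (by omega) hj_lt hclosed_j
  exact ⟨m, hm, by omega, hm_lt, hcard⟩

end Valid

end LadderPattern

end ConvexityNumber

/-- The graph `G` is a ladder: adjacent vertices differ by one step along a row or lie opposite each
other in the same column. -/
structure IsLadder (G : SimpleGraph V) (col : V → ℤ) (row : V → Bool) (lo hi : ℤ) : Prop
    extends LadderCoords col row lo hi where
  adj_iff : ∀ p q, G.Adj p q ↔ (col q = col p + 1 ∧ row q = row p) ∨
    (col p = col q + 1 ∧ row q = row p) ∨ (col q = col p ∧ row q ≠ row p)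

section StrongOrientations

variable {G : SimpleGraph V} {A B : V → V → Prop} {col : V → ℤ} {row : V → Bool} {lo hi i : ℤ}

theorem IsOrientation.eq_of_le (hA : IsOrientation G A) (hB : IsOrientation G B)
    (hle : ∀ p q, A p q → B p q) : A = B := by
  ext p q
  refine ⟨hle p q, fun hpq => ?_⟩
  exact (hA.2.1 p q (hB.1 p q hpq)).resolve_right fun hqp => hB.2.2 p q hpq (hle q p hqp)

theorem LadderPattern.valid_of_strongConnected {w : LadderPattern}
    (L : LadderCoords col row lo hi) (hlt : lo < hi) (hA : StrongConnected (w.Arc col row))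
    (hlo : ¬ w.ClosesRight lo) (hhi : ¬ w.ClosesLeft hi) : w.Valid lo hi := by
  refine ⟨hlt, hlo, hhi, fun i hlo_i hi_hi => ?_⟩
  have := L.nontrivial hlt.le
  obtain ⟨p, rfl, hp⟩ := L.exists_vertex i hlo_i hi_hi (w.rung i)
  obtain ⟨q, -, r, hr, hqr⟩ := hA.exists_arc_out (Set.nonempty_compl_of_nontrivial p)
    (by simp : ({p}ᶜᶜ : Set V).Nonempty)
  obtain rfl : r = p := by simpa using hr
  rcases hqr with ⟨hcol, hrow, hrail⟩ | ⟨-, hrow, hrail⟩ | ⟨hcol, hrow, hrung⟩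
  · right
    rw [LadderPattern.ClosesRight, ← hp, hcol, add_sub_cancel_right, hrow, hrail]
  · left
    rwa [LadderPattern.ClosesLeft, ← hp, hrow]
  · exact absurd (hp.trans (hcol ▸ hrung.symm)) hrow

namespace IsLadder

theorem isOrientation_arc (hG : IsLadder G col row lo hi) (w : LadderPattern) :
    IsOrientation G (w.Arc col row) := by
  simp only [IsOrientation, hG.adj_iff, LadderPattern.Arc]
  refine ⟨by tauto, fun p q => ?_, by grind⟩
  have := bool_eq_of_ne (x := row q) (y := w.rung (col p)) (z := row p)
  grind

theorem row_eq_of_col_ne (hG : IsLadder G col row lo hi) (hA : IsOrientation G A) {p q : V}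
    (hpq : A p q) (hcol : col p ≠ col q) : row q = row p := by
  rcases (hG.adj_iff p q).1 (hA.1 p q hpq) with ⟨-, hrow⟩ | ⟨-, hrow⟩ | ⟨heq, -⟩
  · exact hrow
  · exact hrow
  · exact absurd heq.symm hcol

theorem row_ne_of_col_eq (hG : IsLadder G col row lo hi) (hA : IsOrientation G A) {p q : V}
    (hpq : A p q) (hcol : col p = col q) : row q ≠ row p := by
  have := (hG.adj_iff p q).1 (hA.1 p q hpq)
  grind

theorem exists_arc_right (hG : IsLadder G col row lo hi) (hA : IsOrientation G A)
    (hstrong : StrongConnected A) (hlo : lo ≤ i) (hhi : i < hi) :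
    ∃ p q, A p q ∧ col p = i ∧ col q = i + 1 := by
  obtain ⟨u, hu, -⟩ := hG.exists_vertex i hlo hhi.le true
  obtain ⟨v, hv, -⟩ := hG.exists_vertex (i + 1) (by omega) hhi true
  obtain ⟨p, hp, q, hq, hpq⟩ := hstrong.exists_arc_out (S := {p | col p ≤ i}) ⟨u, hu.le⟩
    ⟨v, by simp [hv]⟩
  have := (hG.adj_iff p q).1 (hA.1 p q hpq)
  rw [Set.mem_ofPred_eq] at hp hq
  exact ⟨p, q, hpq, by omega, by omega⟩

theorem exists_arc_left (hG : IsLadder G col row lo hi) (hA : IsOrientation G A)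
    (hstrong : StrongConnected A) (hlo : lo ≤ i) (hhi : i < hi) :
    ∃ p q, A p q ∧ col p = i + 1 ∧ col q = i := by
  obtain ⟨u, hu, -⟩ := hG.exists_vertex i hlo hhi.le true
  obtain ⟨v, hv, -⟩ := hG.exists_vertex (i + 1) (by omega) hhi true
  obtain ⟨p, hp, q, hq, hpq⟩ := hstrong.exists_arc_out (S := {p | i < col p}) ⟨v, by simp [hv]⟩
    ⟨u, by simp [hu]⟩
  have := (hG.adj_iff p q).1 (hA.1 p q hpq)
  rw [Set.mem_ofPred_eq] at hp hq
  exact ⟨p, q, hpq, by omega, by omega⟩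

theorem exists_rail (hG : IsLadder G col row lo hi) (hA : IsOrientation G A)
    (hstrong : StrongConnected A) (hlo : lo ≤ i) (hhi : i < hi) :
    ∃ b, (∀ p q, A p q → col p = i → col q = i + 1 → row p = b) ∧
      ∀ p q, A p q → col p = i + 1 → col q = i → row p ≠ b := by
  have hne : ∀ p q r s, A p q → col p = i → col q = i + 1 → A r s → col r = i + 1 → col s = i →
      row p ≠ row r := by
    intro p q r s hpq hp hq hrs hr hs hrow
    obtain rfl : q = r := hG.ext q r (hq.trans hr.symm)
      ((hG.row_eq_of_col_ne hA hpq (by omega)).trans hrow)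
    obtain rfl : s = p := hG.ext s p (hs.trans hp.symm)
      ((hG.row_eq_of_col_ne hA hrs (by omega)).trans hrow.symm)
    exact hA.2.2 s q hpq hrs
  obtain ⟨p₀, q₀, hpq₀, hp₀, hq₀⟩ := hG.exists_arc_right hA hstrong hlo hhi
  obtain ⟨r₀, s₀, hrs₀, hr₀, hs₀⟩ := hG.exists_arc_left hA hstrong hlo hhi
  exact ⟨row p₀,
    fun p q hpq hp hq => bool_eq_of_ne (hne p q r₀ s₀ hpq hp hq hrs₀ hr₀ hs₀)
      (hne p₀ q₀ r₀ s₀ hpq₀ hp₀ hq₀ hrs₀ hr₀ hs₀),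
    fun r s hrs hr hs => (hne p₀ q₀ r s hpq₀ hp₀ hq₀ hrs hr hs).symm⟩

theorem exists_rung (hG : IsLadder G col row lo hi) (hA : IsOrientation G A) (i : ℤ) :
    ∃ b, ∀ p q, A p q → col p = i → col q = i → row p = b := by
  by_cases hex : ∃ p q, A p q ∧ col p = i ∧ col q = i
  · obtain ⟨p₀, q₀, hpq₀, hp₀, hq₀⟩ := hex
    refine ⟨row p₀, fun p q hpq hp hq => ?_⟩
    by_contra hrow
    have hrow₀ := hG.row_ne_of_col_eq hA hpq₀ (hp₀.trans hq₀.symm)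
    have hrow_q := hG.row_ne_of_col_eq hA hpq (hp.trans hq.symm)
    obtain rfl : p = q₀ := hG.ext p q₀ (hp.trans hq₀.symm) (bool_eq_of_ne hrow hrow₀)
    obtain rfl : q = p₀ := hG.ext q p₀ (hq.trans hp₀.symm) (bool_eq_of_ne hrow_q hrow₀.symm)
    exact hA.2.2 p q hpq hpq₀
  · exact ⟨true, fun p q hpq hp hq => absurd ⟨p, q, hpq, hp, hq⟩ hex⟩

theorem exists_eq_arc (hG : IsLadder G col row lo hi) (hlt : lo < hi) (hA : IsOrientation G A)
    (hstrong : StrongConnected A) :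
    ∃ w : LadderPattern, w.Valid lo hi ∧ A = w.Arc col row := by
  choose! rail hrail_right hrail_left using fun i (h : lo ≤ i ∧ i < hi) =>
    hG.exists_rail hA hstrong h.1 h.2
  choose rung hrung using hG.exists_rung hA
  set w : LadderPattern :=
    { rail i := if i = lo - 1 then !rung lo else if i = hi then rung hi else rail i
      rung := rung } with hw
  have hrail : ∀ i, lo ≤ i → i < hi → w.rail i = rail i := by
    intro i hlo hhi
    simp [hw, show i ≠ lo - 1 by omega, hhi.ne]
  have harc : A = w.Arc col row := by
    refine hA.eq_of_le (hG.isOrientation_arc w) fun p q hpq => ?_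
    rcases (hG.adj_iff p q).1 (hA.1 p q hpq) with ⟨hcol, hrow⟩ | ⟨hcol, hrow⟩ | ⟨hcol, hrow⟩
    · have := hG.lo_le_col p
      have := hG.col_le_hi q
      refine .inl ⟨hcol, hrow, ?_⟩
      rw [hrail _ (by omega) (by omega)]
      exact hrail_right _ (by omega) p q hpq rfl hcol
    · have := hG.lo_le_col q
      have := hG.col_le_hi p
      refine .inr (.inl ⟨hcol, hrow, ?_⟩)
      rw [hrail _ (by omega) (by omega)]
      exact hrail_left _ (by omega) p q hpq hcol rfl
    · exact .of_rung hcol hrow (hrung _ p q hpq rfl hcol)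
  refine ⟨w, w.valid_of_strongConnected hG.toLadderCoords hlt (harc ▸ hstrong) ?_ ?_, harc⟩
  · simp [LadderPattern.ClosesRight, hw]
  · simp [LadderPattern.ClosesLeft, hw, show hi ≠ lo - 1 by omega]

end IsLadder

end StrongOrientations

section Realization

theorem exists_ne_pred_iff (t : ℤ → Prop) : ∃ r : ℤ → Bool, ∀ i, r i ≠ r (i - 1) ↔ t i := by
  classical
  let succ (k : ℤ) (_ : 0 ≤ k) (x : Bool) : Bool := x ^^ t (k + 1)
  let pred (k : ℤ) (_ : k ≤ 0) (x : Bool) : Bool := x ^^ t k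
  let r (i : ℤ) : Bool := i.inductionOn' 0 false succ pred
  have hr : ∀ i, r i = (r (i - 1) ^^ t i) := by
    intro i
    rcases lt_or_ge 0 i with hi | hi
    · have hstep : r (i - 1 + 1) = (r (i - 1) ^^ t (i - 1 + 1)) :=
        Int.inductionOn'_add_one (Int.le_sub_one_of_lt hi)
      rwa [sub_add_cancel] at hstep
    · have hstep : r (i - 1) = (r i ^^ t i) := Int.inductionOn'_sub_one hi
      simp [hstep]
  exact ⟨r, fun i => by rw [hr i]; cases r (i - 1) <;> simp⟩

namespace LadderPattern

variable {lo hi j m : ℤ} {w : LadderPattern}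

theorem exists_closes_iff {left right : ℤ → Prop} (h : ∀ i, left i ∨ right i) :
    ∃ w : LadderPattern, ∀ i, (w.ClosesLeft i ↔ left i) ∧ (w.ClosesRight i ↔ right i) := by
  classical
  obtain ⟨rail, hrail⟩ := exists_ne_pred_iff fun i => left i ∧ right i
  refine ⟨⟨rail, fun i => if right i then rail (i - 1) else !rail (i - 1)⟩, fun i => ?_⟩
  have := h i
  have := hrail i
  by_cases hright : right i
  · simp_all [ClosesLeft, ClosesRight, eq_comm]
  · simp_all [ClosesLeft, ClosesRight, Bool.eq_not, eq_comm]

theorem exists_valid_cyclicSquare (h : lo < hi) :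
    ∃ w : LadderPattern, w.Valid lo hi ∧ ∀ i, lo ≤ i → i < hi → w.CyclicSquare i := by
  obtain ⟨w, hw⟩ := exists_closes_iff (left := (· ≠ hi)) (right := (· ≠ lo)) (by grind)
  refine ⟨w, ⟨h, by simp [hw], by simp [hw], fun i _ _ => ?_⟩, fun i _ _ => ?_⟩
  · simp only [hw]; omega
  · simp only [CyclicSquare, hw]; omega

theorem exists_valid_hasClosedEnd (hj : 2 ≤ j) (hj_half : (hi + 1 - lo) / 2 ≤ j)
    (hj_lt : j < hi + 1 - lo) :
    ∃ w : LadderPattern, w.Valid lo hi ∧ w.HasClosedEnd lo hi j ∧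
      ∀ m, j < m → m < hi + 1 - lo → ¬ w.HasClosedEnd lo hi m := by
  -- Column `lo + j - 1` closes the first `j` columns. Column `lo + j + 1` matters only when
  -- `hi + 1 - lo = 2 * j + 1`: it keeps the last `j + 1` columns from being convex.
  obtain ⟨w, hw⟩ := exists_closes_iff (left := fun i => i ≠ lo + j - 1 ∧ i ≠ hi)
    (right := fun i => i ≠ lo ∧ (i ≠ lo + j + 1 ∨ i = hi)) (by grind)
  refine ⟨w, ⟨by omega, by simp [hw], by simp [hw], fun i _ _ => ?_⟩, .inl ?_, ?_⟩
  · simp only [hw]; omega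
  · simp only [PrefixClosed, hw]; omega
  rintro m hjm hm (⟨hright, hwit⟩ | ⟨hleft, hwit⟩)
  · simp only [hw] at hright hwit
    obtain ⟨a, hlo_a, ha, hleft_a, hnone⟩ := hwit (by omega)
    have hnext := hnone (lo + m) (by omega) (by omega)
    have hb : m = j + 1 := by omega
    exact hnone (lo + m + 1) (by omega) (by omega) (by omega)
  · simp only [hw] at hleft hwit
    obtain ⟨b, hb, hb_hi, hright_b, hnone⟩ := hwit (by omega)
    have hprev := hnone (hi - m) (by omega) (by omega)
    have ha : hi + 1 - m = lo + j := by omega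
    exact hnone (hi - m - 1) (by omega) (by omega) (by omega)

end LadderPattern

theorem IsLadder.mem_strongConvexitySpectrum_iff [Fintype V] {G : SimpleGraph V} {col : V → ℤ}
    {row : V → Bool} {lo hi : ℤ} (hG : IsLadder G col row lo hi) (hlt : lo < hi) {k : ℕ} :
    k ∈ strongConvexitySpectrum G ↔
      k = 1 ∨ ∃ j : ℤ, 2 ≤ j ∧ (hi + 1 - lo) / 2 ≤ j ∧ j < hi + 1 - lo ∧ (k : ℤ) = 2 * j := by
  have L := hG.toLadderCoords
  constructor
  · rintro ⟨A, hA, hstrong, rfl⟩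
    obtain ⟨w, hw, rfl⟩ := hG.exists_eq_arc hlt hA hstrong
    exact hw.convexityNumber_eq_one_or_large L
  · rintro (rfl | ⟨j, hj, hj_half, hj_lt, hk⟩)
    · obtain ⟨w, hw, hsq⟩ := LadderPattern.exists_valid_cyclicSquare hlt
      exact ⟨_, hG.isOrientation_arc w, hw.strongConnected L,
        hw.convexityNumber_eq_one_of_cyclicSquare L hsq⟩
    · obtain ⟨w, hw, hclosed, hmax⟩ :=
        LadderPattern.exists_valid_hasClosedEnd hj hj_half hj_lt
      have hcon := hw.convexityNumber_eq_two_mul L (by omega) hj_lt hclosed hmax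
      exact ⟨_, hG.isOrientation_arc w, hw.strongConnected L, by omega⟩

end Realization

section Grid

variable {n : ℕ}

/-- The column of a vertex of `P_n □ P_2`, numbered from `0`. -/
def gridCol (p : Fin n × Fin 2) : ℤ :=
  (p.1 : ℕ)

/-- The row of a vertex of `P_n □ P_2`. -/
def gridRow (p : Fin n × Fin 2) : Bool :=
  p.2 = 1

theorem gridCol_eq_iff {p q : Fin n × Fin 2} : gridCol p = gridCol q ↔ p.1 = q.1 := by
  rw [gridCol, gridCol, Nat.cast_inj, Fin.val_inj]

theorem gridRow_eq_iff {p q : Fin n × Fin 2} : gridRow p = gridRow q ↔ p.2 = q.2 := by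
  rw [gridRow, gridRow, decide_eq_decide]
  omega

theorem isLadder_gridGraph (n : ℕ) :
    IsLadder (gridGraph n 2) gridCol gridRow 0 ((n : ℤ) - 1) where
  ext _ _ hcol hrow := Prod.ext (gridCol_eq_iff.1 hcol) (gridRow_eq_iff.1 hrow)
  exists_vertex i hlo hhi x := by
    refine ⟨(⟨i.toNat, by omega⟩, if x then 1 else 0), Int.toNat_of_nonneg hlo, ?_⟩
    cases x <;> rfl
  lo_le_col p := Int.natCast_nonneg _
  col_le_hi p := Int.le_sub_one_of_lt (Nat.cast_lt.2 p.1.isLt)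
  adj_iff p q := by
    have hsucc (r s : Fin n × Fin 2) : gridCol s = gridCol r + 1 ↔ (r.1 : ℕ) + 1 = s.1 := by
      rw [gridCol, gridCol]
      omega
    have hvert : ((p.2 : ℕ) + 1 = q.2 ∨ (q.2 : ℕ) + 1 = p.2) ↔ q.2 ≠ p.2 := by omega
    rw [gridGraph, SimpleGraph.boxProd_adj, SimpleGraph.pathGraph_adj, SimpleGraph.pathGraph_adj,
      hsucc, hsucc, Ne, gridRow_eq_iff, gridCol_eq_iff, hvert, or_and_right, or_assoc,
      eq_comm (a := p.2), eq_comm (a := p.1), and_comm (a := q.2 ≠ p.2)]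

end Grid

/-- The strong convexity spectrum of the grid `P_n □ P_2`. -/
theorem strongConvexitySpectrum_grid_n2 (n : ℕ) (hn : 2 ≤ n) :
    strongConvexitySpectrum (gridGraph n 2) =
      (({1} : Set ℕ) ∪ {k : ℕ | ∃ j : ℕ, n / 2 ≤ j ∧ j ≤ n - 1 ∧ k = 2 * j}) \ {2} := by
  ext k
  rw [(isLadder_gridGraph n).mem_strongConvexitySpectrum_iff (by omega)]
  simp only [Set.mem_sdiff, Set.mem_union, Set.mem_singleton_iff, Set.mem_ofPred_eq]
  constructor
  · rintro (rfl | ⟨j, hj, hj_half, hj_lt, hk⟩)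
    · simp
    · exact ⟨.inr ⟨j.toNat, by omega, by omega, by omega⟩, by omega⟩
  · rintro ⟨rfl | ⟨j, hj_half, hj_le, rfl⟩, hne⟩
    · exact .inl rfl
    · exact .inr ⟨j, by omega, by omega, by omega, by push_cast; rfl⟩
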